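/- Let h ∈ K̄[z] be nonzero and suppose h = q² + ρ and h = q̃² + ρ̃ are both good part-square decompositions of h, with v(ρ) − v(h) < 2v(2). Then v(ρ̃) = v(ρ), and for any normalized reductions r of ρ and r̃ of ρ̃ in k[z] the following hold: for every odd integer i, the coefficient of z^i in r vanishes if and only if the coefficient of z^i in r̃ vanishes; and there exists c ∈ k× with r′ = c·r̃′ (the derivatives of the normalized reductions agree up to scaling). -/

import Mathlib

open Polynomial

/-- The *Gauss valuation* of a polynomial: the minimum of the valuations of its
coefficients (with value `⊤ = +∞` for the zero polynomial). -/
noncomputable def gaussVal {Kbar : Type*} [Field Kbar]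
    (v : AddValuation Kbar (WithTop ℚ)) (h : Kbar[X]) : WithTop ℚ :=
  h.support.inf fun i => v (h.coeff i)

/-- `h = q² + ρ` is a *part-square decomposition* of `h`:
`deg q ≤ ⌈deg h / 2⌉`, encoded as `2 * deg q ≤ deg h + 1` (`q = 0` is allowed). -/
def IsPSD {Kbar : Type*} [Field Kbar] (h q ρ : Kbar[X]) : Prop :=
  h = q ^ 2 + ρ ∧ 2 * q.natDegree ≤ h.natDegree + 1

/-- A part-square decomposition `h = q² + ρ` is *good* if either `v ρ − v h ≥ 2 v 2`,
or `v ρ − v h < 2 v 2` and no part-square decomposition of `h` has strictly larger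
Gauss valuation of its remainder. -/
def IsGoodPSD {Kbar : Type*} [Field Kbar] (v : AddValuation Kbar (WithTop ℚ))
    (h q ρ : Kbar[X]) : Prop :=
  IsPSD h q ρ ∧
    (gaussVal v h + (v 2 + v 2) ≤ gaussVal v ρ ∨
      (gaussVal v ρ < gaussVal v h + (v 2 + v 2) ∧
        ∀ q' ρ' : Kbar[X], IsPSD h q' ρ' → gaussVal v ρ' ≤ gaussVal v ρ))

/-- The residue field of `v` is algebraically closed, encoded via integral lifts:
every monic polynomial of positive degree with integral coefficients has an integral
root modulo the maximal ideal. -/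
def ResidueAlgClosed {Kbar : Type*} [Field Kbar]
    (v : AddValuation Kbar (WithTop ℚ)) : Prop :=
  ∀ p : Kbar[X], p.Monic → 0 < p.natDegree → (∀ i, 0 ≤ v (p.coeff i)) →
    ∃ x : Kbar, 0 ≤ v x ∧ 0 < v (p.eval x)

/-!
Put `s = q̃ - q`, so that `ρ - ρ̃ = s (s + 2 q)`, and let `T = v ρ = v ρ̃`. By multiplicativity of
the Gauss valuation, `2 v q ≥ v h`. Either `v s < v (2 q)`, and then `2 v s = v (ρ - ρ̃) ≥ T`, or
`2 v s ≥ 2 v 2 + v h > T`; so `2 v s ≥ T` in both cases. Hence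
`2 v (2 q s) ≥ 2 v 2 + v h + T > 2 T`, while each coefficient of odd degree of `s ^ 2` is twice a
sum of products of coefficients of `s`, and `v 2 > 0` because `v h ≤ T`. The coefficients of odd
degree of `ρ` and `ρ̃` therefore agree beyond `T`, and so do all coefficients of the derivatives,
because the coefficients of even degree get multiplied by even integers.
-/

open Finset.HasAntidiagonal in
theorem coeff_sq_of_odd {R : Type*} [CommSemiring R] (p : R[X]) {n : ℕ} (hn : Odd n) :
    (p ^ 2).coeff n =
      2 * ∑ x ∈ antidiagonal n with x.1 < x.2, p.coeff x.1 * p.coeff x.2 := by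
  have hswap : ∑ x ∈ antidiagonal n with ¬x.1 < x.2, p.coeff x.1 * p.coeff x.2 =
      ∑ x ∈ antidiagonal n with x.1 < x.2, p.coeff x.1 * p.coeff x.2 := by
    refine Finset.sum_equiv (Equiv.prodComm ℕ ℕ) (fun ⟨i, j⟩ => ?_) fun x _ => mul_comm _ _
    simp only [Finset.mem_filter, mem_antidiagonal, Equiv.prodComm_apply, Prod.swap_prod_mk]
    grind
  rw [sq, coeff_mul, ← Finset.sum_filter_add_sum_filter_not _ fun x => x.1 < x.2, hswap, two_mul]

theorem derivative_C_inv_mul_sub {K : Type*} [Field K] (f g : K[X]) (a : K) {b : K} (hb : b ≠ 0) :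
    derivative (C a⁻¹ * f) - C (a⁻¹ * b) * derivative (C b⁻¹ * g) =
      C a⁻¹ * derivative (f - g) := by
  rw [derivative_C_mul, derivative_C_mul, ← mul_assoc, ← C_mul, mul_assoc, mul_inv_cancel₀ hb,
    mul_one, derivative_sub, mul_sub]

theorem pos_of_le_of_lt_add_add {Γ : Type*} [AddCommMonoid Γ] [LinearOrder Γ]
    [IsOrderedAddMonoid Γ] {a b T : Γ} (hle : a ≤ T) (hlt : T < a + (b + b)) : 0 < b := by
  by_contra! hb
  exact (hlt.trans_le (add_le_of_nonpos_right (add_nonpos hb hb))).not_ge hle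

section AddValuation

theorem zero_le_addValuation_natCast {R Γ₀ : Type*} [Ring R]
    [LinearOrderedAddCommMonoidWithTop Γ₀] (v : AddValuation R Γ₀) (n : ℕ) : 0 ≤ v n := by
  simpa using v.map_le_sum (s := Finset.range n) (f := fun _ => 1) (g := 0) (by simp)

theorem zero_lt_addValuation_inv_mul_iff {K Γ₀ : Type*} [Field K]
    [LinearOrderedAddCommGroupWithTop Γ₀] (v : AddValuation K Γ₀) {γ x : K} (hγ : v γ ≠ ⊤) :
    0 < v (γ⁻¹ * x) ↔ v γ < v x := by
  rw [mul_comm, ← div_eq_mul_inv, v.map_div, LinearOrderedAddCommGroupWithTop.sub_pos,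
    or_iff_left hγ]

theorem lt_addValuation_iff_of_lt_sub {R Γ₀ : Type*} [Ring R]
    [LinearOrderedAddCommMonoidWithTop Γ₀] (v : AddValuation R Γ₀) {x y : R} {a : Γ₀}
    (hxy : a < v (x - y)) : a < v x ↔ a < v y := by
  constructor <;> intro hlt
  · simpa using v.map_lt_add hlt ((v.map_sub_swap x y).symm ▸ hxy : a < v (y - x))
  · simpa using v.map_lt_add hlt hxy

variable {R Γ₀ : Type*} [CommRing R] [LinearOrderedAddCommMonoidWithTop Γ₀]
  (v : AddValuation R Γ₀)

theorem le_addValuation_coeff_sq_of_odd {p : R[X]} {a : Γ₀} (hp : ∀ i, a ≤ v (p.coeff i))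
    {n : ℕ} (hn : Odd n) : v 2 + (a + a) ≤ v ((p ^ 2).coeff n) := by
  rw [coeff_sq_of_odd p hn, v.map_mul]
  gcongr
  refine v.map_le_sum fun x _ => ?_
  rw [v.map_mul]
  exact add_le_add (hp _) (hp _)

theorem lt_addValuation_coeff_derivative {f : R[X]} {a : Γ₀} (ha : a ≠ ⊤) (htwo : 0 < v 2)
    (hf : ∀ i, a ≤ v (f.coeff i)) (hodd : ∀ i, Odd i → a < v (f.coeff i)) (i : ℕ) :
    a < v ((derivative f).coeff i) := by
  rw [coeff_derivative, v.map_mul, add_comm]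
  norm_cast
  rcases Nat.even_or_odd' (i + 1) with ⟨m, heven | hi⟩
  · have hpos : 0 < v ((i + 1 : ℕ) : R) := by
      rw [heven, Nat.cast_mul, v.map_mul, Nat.cast_ofNat]
      exact add_pos_of_pos_of_nonneg htwo (zero_le_addValuation_natCast v m)
    calc a = 0 + a := (zero_add a).symm
      _ < v ((i + 1 : ℕ) : R) + a := (add_lt_add_iff_left_of_ne_top ha).mpr hpos
      _ ≤ v ((i + 1 : ℕ) : R) + v (f.coeff (i + 1)) := by gcongr; exact hf _
  · exact (hodd _ ⟨m, hi⟩).trans_le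
      (le_add_of_nonneg_left (zero_le_addValuation_natCast v (i + 1)))

end AddValuation

section GaussValuation

variable {K : Type*} [Field K] (v : AddValuation K (WithTop ℚ))

theorem le_gaussVal_iff {p : K[X]} {a : WithTop ℚ} :
    a ≤ gaussVal v p ↔ ∀ i, a ≤ v (p.coeff i) := by
  refine Finset.le_inf_iff.trans ⟨fun hle i => ?_, fun hle i _ => hle i⟩
  by_cases hi : p.coeff i = 0
  · simp [hi]
  · exact hle i (mem_support_iff.mpr hi)

theorem gaussVal_le_coeff (p : K[X]) (i : ℕ) : gaussVal v p ≤ v (p.coeff i) :=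
  (le_gaussVal_iff v).mp le_rfl i

theorem gaussVal_C (a : K) : gaussVal v (C a) = v a := by
  refine le_antisymm (by simpa using gaussVal_le_coeff v (C a) 0) ((le_gaussVal_iff v).mpr ?_)
  intro i
  rw [coeff_C]
  split_ifs <;> simp

theorem min_gaussVal_le_add (p q : K[X]) :
    min (gaussVal v p) (gaussVal v q) ≤ gaussVal v (p + q) := by
  refine (le_gaussVal_iff v).mpr fun i => ?_
  rw [coeff_add]
  exact (min_le_min (gaussVal_le_coeff v p i) (gaussVal_le_coeff v q i)).trans (v.map_add _ _)

theorem exists_first_coeff_eq_gaussVal {p : K[X]} (hp : p ≠ 0) :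
    ∃ j, v (p.coeff j) = gaussVal v p ∧ ∀ i < j, gaussVal v p < v (p.coeff i) := by
  classical
  obtain ⟨k, -, hk⟩ := Finset.exists_mem_eq_inf p.support (nonempty_support_iff.mpr hp)
    fun i => v (p.coeff i)
  have hex : ∃ j, v (p.coeff j) = gaussVal v p := ⟨k, hk.symm⟩
  exact ⟨Nat.find hex, Nat.find_spec hex, fun i hi =>
    (gaussVal_le_coeff v p i).lt_of_ne' (Nat.find_min hex hi)⟩

theorem gaussVal_ne_top {p : K[X]} (hp : p ≠ 0) : gaussVal v p ≠ ⊤ := by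
  intro htop
  refine hp (Polynomial.ext fun i => v.top_iff.mp ?_)
  exact top_le_iff.mp (htop ▸ gaussVal_le_coeff v p i)

theorem gaussVal_add_le_mul (p q : K[X]) :
    gaussVal v p + gaussVal v q ≤ gaussVal v (p * q) := by
  refine (le_gaussVal_iff v).mpr fun i => ?_
  rw [coeff_mul]
  refine v.map_le_sum fun x _ => ?_
  rw [v.map_mul]
  exact add_le_add (gaussVal_le_coeff v p _) (gaussVal_le_coeff v q _)

open Finset.HasAntidiagonal in
theorem gaussVal_mul_le_add {p q : K[X]} (hp : p ≠ 0) (hq : q ≠ 0) :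
    gaussVal v (p * q) ≤ gaussVal v p + gaussVal v q := by
  obtain ⟨j, hj, hjlt⟩ := exists_first_coeff_eq_gaussVal v hp
  obtain ⟨k, hk, hklt⟩ := exists_first_coeff_eq_gaussVal v hq
  have hlead : v (p.coeff j * q.coeff k) = gaussVal v p + gaussVal v q := by
    rw [v.map_mul, hj, hk]
  have hrest : gaussVal v p + gaussVal v q <
      v (∑ x ∈ (antidiagonal (j + k)).erase (j, k), p.coeff x.1 * q.coeff x.2) := by
    refine v.map_lt_sum (WithTop.add_ne_top.mpr ⟨gaussVal_ne_top v hp, gaussVal_ne_top v hq⟩) ?_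
    rintro ⟨a, b⟩ hab
    have hcases : a < j ∨ b < k := by grind [mem_antidiagonal]
    rw [v.map_mul]
    rcases hcases with ha | hb
    · exact WithTop.add_lt_add_of_lt_of_le (gaussVal_ne_top v hq) (hjlt a ha)
        (gaussVal_le_coeff v q b)
    · exact WithTop.add_lt_add_of_le_of_lt (gaussVal_ne_top v hp) (gaussVal_le_coeff v p a)
        (hklt b hb)
  have hcoeff : v ((p * q).coeff (j + k)) = gaussVal v p + gaussVal v q := by
    have hmem : (j, k) ∈ antidiagonal (j + k) := by simp
    rw [coeff_mul, ← Finset.add_sum_erase _ _ hmem,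
      v.map_add_eq_of_lt_left (hlead ▸ hrest), hlead]
  exact hcoeff ▸ gaussVal_le_coeff v (p * q) (j + k)

theorem gaussVal_mul (p q : K[X]) : gaussVal v (p * q) = gaussVal v p + gaussVal v q := by
  by_cases hp : p = 0
  · simp [hp, gaussVal]
  by_cases hq : q = 0
  · simp [hq, gaussVal]
  exact (gaussVal_mul_le_add v hp hq).antisymm (gaussVal_add_le_mul v p q)

/-- The Gauss valuation, bundled as an additive valuation on `K[X]` extending `v`; it makes the
general theory of valuations available for `gaussVal v`. -/
noncomputable def gaussAddValuation : AddValuation K[X] (WithTop ℚ) :=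
  AddValuation.of (gaussVal v) (by simp [gaussVal]) (by simpa using gaussVal_C v 1)
    (min_gaussVal_le_add v) (gaussVal_mul v)

theorem gaussAddValuation_apply (p : K[X]) : gaussAddValuation v p = gaussVal v p :=
  rfl

theorem gaussAddValuation_two : gaussAddValuation v 2 = v 2 :=
  gaussVal_C v 2

end GaussValuation

section SquareDecomposition

variable {R Γ₀ : Type*} [CommRing R] [LinearOrderedAddCommMonoidWithTop Γ₀]
  (w : AddValuation R Γ₀) {h q ρ q' ρ' : R} {T : Γ₀}

theorem remainder_sub_remainder_of_eq_sq_add (hq : h = q ^ 2 + ρ) (hq' : h = q' ^ 2 + ρ') :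
    ρ - ρ' = (q' - q) ^ 2 + 2 * q * (q' - q) := by
  linear_combination hq' - hq

theorem le_addValuation_root_add_self (hq : h = q ^ 2 + ρ) (hρ : w h ≤ w ρ) :
    w h ≤ w q + w q := by
  rw [← w.map_mul, ← sq, eq_sub_of_add_eq hq.symm]
  exact w.map_le_sub le_rfl hρ

theorem le_addValuation_two_mul_root_add_self (hq : h = q ^ 2 + ρ) (hρ : w h ≤ w ρ) :
    w h + (w 2 + w 2) ≤ w (2 * q) + w (2 * q) := by
  rw [w.map_mul, add_add_add_comm, add_comm]
  gcongr
  exact le_addValuation_root_add_self w hq hρ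

theorem le_addValuation_root_sub_add_self (hq : h = q ^ 2 + ρ) (hq' : h = q' ^ 2 + ρ')
    (hT : w h ≤ T) (hρ : T ≤ w ρ) (hρ' : T ≤ w ρ') (htwo : T ≤ w h + (w 2 + w 2)) :
    T ≤ w (q' - q) + w (q' - q) := by
  have hcross := htwo.trans (le_addValuation_two_mul_root_add_self w hq (hT.trans hρ))
  rcases lt_or_ge (w (q' - q)) (w (2 * q)) with hlt | hge
  · calc T ≤ w (ρ - ρ') := w.map_le_sub hρ hρ'
      _ = w ((q' - q) * (q' - q + 2 * q)) := by
        rw [remainder_sub_remainder_of_eq_sq_add hq hq']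
        ring_nf
      _ = w (q' - q) + w (q' - q) := by rw [w.map_mul, w.map_add_eq_of_lt_left hlt]
  · exact hcross.trans (add_le_add hge hge)

theorem lt_addValuation_cross_term (hq : h = q ^ 2 + ρ) (hq' : h = q' ^ 2 + ρ')
    (hT : w h ≤ T) (hρ : T ≤ w ρ) (hρ' : T ≤ w ρ') (htwo : T < w h + (w 2 + w 2)) :
    T < w (2 * q * (q' - q)) := by
  by_contra! hle
  have htop : T ≠ ⊤ := ne_top_of_lt htwo
  refine (add_le_add hle hle).not_gt ?_
  calc T + T < w h + (w 2 + w 2) + T := (add_lt_add_iff_left_of_ne_top htop).mpr htwo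
    _ ≤ (w (2 * q) + w (2 * q)) + (w (q' - q) + w (q' - q)) :=
      add_le_add (le_addValuation_two_mul_root_add_self w hq (hT.trans hρ))
        (le_addValuation_root_sub_add_self w hq hq' hT hρ hρ' htwo.le)
    _ = w (2 * q * (q' - q)) + w (2 * q * (q' - q)) := by
      rw [w.map_mul (2 * q), add_add_add_comm]

end SquareDecomposition

section PartSquareDecomposition

variable {K : Type*} [Field K] {v : AddValuation K (WithTop ℚ)} {h q ρ q' ρ' : K[X]}
  {T : WithTop ℚ}

theorem lt_addValuation_coeff_remainder_sub_of_odd (hq : h = q ^ 2 + ρ) (hq' : h = q' ^ 2 + ρ')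
    (hT : gaussVal v h ≤ T) (hρ : T ≤ gaussVal v ρ) (hρ' : T ≤ gaussVal v ρ')
    (htwo : T < gaussVal v h + (v 2 + v 2)) {i : ℕ} (hi : Odd i) :
    T < v ((ρ - ρ').coeff i) := by
  have htwo_pos : 0 < v 2 := pos_of_le_of_lt_add_add hT htwo
  have htop : T ≠ ⊤ := ne_top_of_lt htwo
  simp only [← gaussAddValuation_apply, ← gaussAddValuation_two] at hT hρ hρ' htwo
  have hsquare : T < v (((q' - q) ^ 2).coeff i) :=
    calc T = 0 + T := (zero_add T).symm
      _ < v 2 + T := (add_lt_add_iff_left_of_ne_top htop).mpr htwo_pos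
      _ ≤ v 2 + (gaussVal v (q' - q) + gaussVal v (q' - q)) := by
        gcongr
        exact le_addValuation_root_sub_add_self (gaussAddValuation v) hq hq' hT hρ hρ' htwo.le
      _ ≤ v (((q' - q) ^ 2).coeff i) :=
        le_addValuation_coeff_sq_of_odd v (gaussVal_le_coeff v _) hi
  have hcross : T < v ((2 * q * (q' - q)).coeff i) :=
    (lt_addValuation_cross_term (gaussAddValuation v) hq hq' hT hρ hρ' htwo).trans_le
      (gaussVal_le_coeff v _ i)
  rw [remainder_sub_remainder_of_eq_sq_add hq hq', coeff_add]
  exact v.map_lt_add hsquare hcross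

theorem IsPSD.zero_self (h : K[X]) : IsPSD h 0 h := by
  simp [IsPSD]

theorem IsGoodPSD.gaussVal_remainder_le (hgood : IsGoodPSD v h q ρ)
    (ht : gaussVal v ρ < gaussVal v h + (v 2 + v 2)) (hpsd : IsPSD h q' ρ') :
    gaussVal v ρ' ≤ gaussVal v ρ :=
  (hgood.2.resolve_left ht.not_ge).2 q' ρ' hpsd

theorem IsGoodPSD.gaussVal_remainder_eq (hgood : IsGoodPSD v h q ρ)
    (hgood' : IsGoodPSD v h q' ρ') (ht : gaussVal v ρ < gaussVal v h + (v 2 + v 2)) :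
    gaussVal v ρ' = gaussVal v ρ :=
  have hle := hgood.gaussVal_remainder_le ht hgood'.1
  hle.antisymm (hgood'.gaussVal_remainder_le (hle.trans_lt ht) hgood.1)

end PartSquareDecomposition

theorem stmt2_general {K : Type*} [Field K] (v : AddValuation K (WithTop ℚ))
    (h q ρ q' ρ' : K[X]) (hgood : IsGoodPSD v h q ρ) (hgood' : IsGoodPSD v h q' ρ')
    (ht : gaussVal v ρ < gaussVal v h + (v 2 + v 2)) :
    gaussVal v ρ' = gaussVal v ρ ∧
    ∀ γ γ' : K, v γ = gaussVal v ρ → v γ' = gaussVal v ρ' →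
      (∀ i : ℕ, Odd i →
        (0 < v ((C γ⁻¹ * ρ).coeff i) ↔ 0 < v ((C γ'⁻¹ * ρ').coeff i))) ∧
      ∃ c : K, v c = 0 ∧
        ∀ i : ℕ,
          0 < v ((derivative (C γ⁻¹ * ρ) - C c * derivative (C γ'⁻¹ * ρ')).coeff i) := by
  have heq : gaussVal v ρ' = gaussVal v ρ := hgood.gaussVal_remainder_eq hgood' ht
  have htop : gaussVal v ρ ≠ ⊤ := ne_top_of_lt ht
  have hle : gaussVal v h ≤ gaussVal v ρ := hgood.gaussVal_remainder_le ht (IsPSD.zero_self h)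
  have hodd : ∀ i, Odd i → gaussVal v ρ < v ((ρ - ρ').coeff i) := fun i =>
    lt_addValuation_coeff_remainder_sub_of_odd hgood.1.1 hgood'.1.1 hle le_rfl heq.ge ht
  have hderiv : ∀ i, gaussVal v ρ < v ((derivative (ρ - ρ')).coeff i) :=
    lt_addValuation_coeff_derivative v htop (pos_of_le_of_lt_add_add hle ht)
      ((le_gaussVal_iff v).mp ((gaussAddValuation v).map_le_sub le_rfl heq.ge)) hodd
  refine ⟨heq, fun γ γ' hγ hγ' => ?_⟩
  rw [heq] at hγ'
  have hγ_top : v γ ≠ ⊤ := hγ ▸ htop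
  have hγ'_top : v γ' ≠ ⊤ := hγ' ▸ htop
  refine ⟨fun i hi => ?_, γ⁻¹ * γ', ?_, fun i => ?_⟩
  · rw [coeff_C_mul, coeff_C_mul, zero_lt_addValuation_inv_mul_iff v hγ_top,
      zero_lt_addValuation_inv_mul_iff v hγ'_top, hγ, hγ']
    exact lt_addValuation_iff_of_lt_sub v (coeff_sub ρ ρ' i ▸ hodd i hi)
  · rw [v.map_mul, v.map_inv, hγ, hγ',
      LinearOrderedAddCommGroupWithTop.neg_add_cancel_of_ne_top htop]
  · rw [derivative_C_inv_mul_sub ρ ρ' γ (v.ne_top_iff.mp hγ'_top), coeff_C_mul,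
      zero_lt_addValuation_inv_mul_iff v hγ_top, hγ]
    exact hderiv i

/-- If `h = q² + ρ = q̃² + ρ̃` are two good part-square decompositions
of a nonzero `h` with `v ρ − v h < 2 v 2`, then `v ρ̃ = v ρ`, and for any normalized
reductions (i.e. any choices of scalars `γ, γ'` of the appropriate valuation):
the same odd degrees occur (a coefficient of the reduction vanishes iff the valuation of
the corresponding coefficient of `γ⁻¹ρ` is positive), and the derivatives of the
normalized reductions agree up to a unit scalar `c`. -/
theorem stmt2 {Kbar : Type*} [Field Kbar] [IsAlgClosed Kbar]
    (v : AddValuation Kbar (WithTop ℚ)) (hchar : (2 : Kbar) ≠ 0)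
    (hres : ResidueAlgClosed v)
    (h q ρ q' ρ' : Kbar[X]) (hh : h ≠ 0)
    (hgood : IsGoodPSD v h q ρ) (hgood' : IsGoodPSD v h q' ρ')
    (ht : gaussVal v ρ < gaussVal v h + (v 2 + v 2)) :
    gaussVal v ρ' = gaussVal v ρ ∧
    ∀ γ γ' : Kbar, v γ = gaussVal v ρ → v γ' = gaussVal v ρ' →
      (∀ i : ℕ, Odd i →
        (0 < v ((C γ⁻¹ * ρ).coeff i) ↔ 0 < v ((C γ'⁻¹ * ρ').coeff i))) ∧
      ∃ c : Kbar, v c = 0 ∧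
        ∀ i : ℕ,
          0 < v ((derivative (C γ⁻¹ * ρ) - C c * derivative (C γ'⁻¹ * ρ')).coeff i) :=
  stmt2_general v h q ρ q' ρ' hgood hgood' ht
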